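/- arXiv:1301.0138 — 5 statements merged into one kernel-verified Lean document; each statement's English description precedes it below -/
import Mathlib

section
/- For every positive integer m, the polynomial \tilde{R}_m(x,y) = S_m(y) − S_{m−1}(y) + x²·∑_{i=0}^{m−1} S_i(y) is irreducible in the polynomial ring ℂ[x,y]. -/
open Polynomial

/-- The Chebyshev-like polynomials `S n ∈ R[X]` defined by `S 0 = 1`, `S 1 = X` and
`S (n+1) = X * S n - S (n-1)` for all `n : ℤ`. -/
noncomputable def S (R : Type*) [CommRing R] : ℤ → R[X]
  | 0 => 1
  | 1 => X
  | (n : ℕ) + 2 => X * S R (n + 1) - S R n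
  | -((n : ℕ) + 1) => X * S R (-n) - S R (-n + 1)
  termination_by n => Int.natAbs n + Int.natAbs (n - 1)

/-- The variable `x` of `ℂ[x,y]`, realized as `MvPolynomial (Fin 2) ℂ`. -/
noncomputable def xP : MvPolynomial (Fin 2) ℂ := MvPolynomial.X 0

/-- The variable `y` of `ℂ[x,y]`. -/
noncomputable def yP : MvPolynomial (Fin 2) ℂ := MvPolynomial.X 1

theorem S_zero (R : Type*) [CommRing R] : S R 0 = 1 := by simp [S]

theorem S_one (R : Type*) [CommRing R] : S R 1 = X := by simp [S]

theorem S_natCast_add_two (R : Type*) [CommRing R] (n : ℕ) :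
    S R (n + 2) = X * S R (n + 1) - S R n :=
  S.eq_3 R n

/-- The first-order system satisfied by `S (n + 1) - S n` and `S (n + 1) + S n`. -/
theorem derivative_S_sub_and_add (n : ℕ) :
    2 * (X + 2) * derivative (S ℂ (n + 1) - S ℂ n) + (S ℂ (n + 1) - S ℂ n)
        = (2 * (n : ℂ[X]) + 3) * (S ℂ (n + 1) + S ℂ n) ∧
      2 * (X - 2) * derivative (S ℂ (n + 1) + S ℂ n) + (S ℂ (n + 1) + S ℂ n)
        = (2 * (n : ℂ[X]) + 3) * (S ℂ (n + 1) - S ℂ n) := by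
  induction n with
  | zero =>
    simp only [Nat.cast_zero, zero_add, S_zero, S_one, derivative_sub, derivative_add,
      derivative_X, derivative_one]
    constructor <;> ring
  | succ k ih =>
    obtain ⟨h₁, h₂⟩ := ih
    have hk : ((k + 1 : ℕ) : ℤ) + 1 = k + 2 := by push_cast; ring
    rw [hk, S_natCast_add_two]
    push_cast
    simp only [derivative_sub, derivative_add, derivative_mul, derivative_X, one_mul] at h₁ h₂ ⊢
    constructor
    · refine mul_left_cancel₀ (two_ne_zero (α := ℂ[X])) ?_
      linear_combination X * h₁ + (X + 2) * h₂
    · refine mul_left_cancel₀ (two_ne_zero (α := ℂ[X])) ?_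
      linear_combination (X - 2) * h₁ + X * h₂

theorem S_sq_add_S_sq (R : Type*) [CommRing R] (n : ℕ) :
    S R (n + 1) ^ 2 + S R n ^ 2 - X * S R (n + 1) * S R n = 1 := by
  induction n with
  | zero => simp only [Nat.cast_zero, zero_add, S_zero, S_one]; ring
  | succ k ih =>
    have hk : ((k + 1 : ℕ) : ℤ) + 1 = k + 2 := by push_cast; ring
    rw [hk, S_natCast_add_two]
    push_cast
    linear_combination ih

theorem S_sub_eq_one_add_mul_sum (R : Type*) [CommRing R] (n : ℕ) :
    S R (n + 1) - S R n = 1 + (X - 2) * ∑ i ∈ Finset.range (n + 1), S R i := by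
  induction n with
  | zero =>
    simp only [Nat.cast_zero, zero_add, S_zero, S_one, Finset.sum_range_one]
    ring
  | succ k ih =>
    have hk : ((k + 1 : ℕ) : ℤ) + 1 = k + 2 := by push_cast; ring
    rw [hk, S_natCast_add_two, Finset.sum_range_succ]
    push_cast
    linear_combination ih

theorem exists_isRoot_S_sub (n : ℕ) : ∃ r, (S ℂ (n + 1) - S ℂ n).IsRoot r := by
  refine Complex.exists_root (not_le.mp fun hdeg => ?_)
  obtain ⟨h₁, h₂⟩ := derivative_S_sub_and_add n
  have hA := congrArg (eval 2) (S_sub_eq_one_add_mul_sum ℂ n)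
  have hder : derivative (S ℂ (n + 1) - S ℂ n) = 0 := by
    rw [eq_C_of_degree_le_zero hdeg, derivative_C]
  rw [hder] at h₁
  replace h₁ := congrArg (eval 2) h₁
  replace h₂ := congrArg (eval 2) h₂
  simp only [eval_add, eval_sub, eval_mul, eval_natCast, eval_ofNat, eval_X, eval_one, eval_zero]
    at hA h₁ h₂
  have h : ((n : ℂ) + 1) * (n + 2) = 0 := by
    linear_combination (-1 / 4) * h₁ - (2 * (n : ℂ) + 3) / 4 * h₂
      + (1 / 4 - (2 * (n : ℂ) + 3) ^ 2 / 4) * hA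
  norm_cast at h

theorem not_sq_dvd_S_sub (n : ℕ) (r : ℂ) : ¬ (X - C r) ^ 2 ∣ S ℂ (n + 1) - S ℂ n := by
  rintro ⟨q, hq⟩
  have h₁ := congrArg (eval r) (derivative_S_sub_and_add n).1
  have h₂ := congrArg (eval r) (S_sq_add_S_sq ℂ n)
  have hA := congrArg (eval r) hq
  rw [hq] at h₁
  simp only [derivative_mul, derivative_pow, eval_add, eval_sub, eval_mul, eval_natCast,
    eval_ofNat, eval_X, eval_one, eval_pow, eval_C, sub_self] at hA h₁ h₂
  have hn : (2 * (n : ℂ) + 3) ≠ 0 := by norm_cast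
  have hD : eval r (S ℂ (n + 1)) + eval r (S ℂ n) = 0 := by
    simpa [hn] using h₁.symm
  have ha : eval r (S ℂ (n + 1)) = 0 := by linear_combination (hA + hD) / 2
  have hb : eval r (S ℂ n) = 0 := by linear_combination (hD - hA) / 2
  simp [ha, hb] at h₂

/-- Eisenstein's criterion for `a + b x²`. -/
theorem irreducible_C_add_X_sq_mul_C {R : Type*} [CommRing R] [IsDomain R] {a b p : R}
    (hab : IsCoprime a b) (hp : Prime p) (hpa : p ∣ a) (hpa2 : ¬ p ^ 2 ∣ a) :
    Irreducible (C a + X ^ 2 * C b : R[X]) := by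
  have hpb : ¬ p ∣ b := fun h => hp.not_isUnit (hab.isUnit_of_dvd' hpa h)
  have hb : b ≠ 0 := fun h => hpb (h ▸ dvd_zero p)
  have hf : (C a + X ^ 2 * C b : R[X]) = C b * X ^ 2 + C 0 * X + C a := by
    rw [C_0]; ring
  rw [hf]
  have hprime : (Ideal.span {p}).IsPrime := (Ideal.span_singleton_prime hp.ne_zero).mpr hp
  refine irreducible_of_eisenstein_criterion hprime ?_ ?_ ?_ ?_ ?_
  · rwa [leadingCoeff_quadratic hb, Ideal.mem_span_singleton]
  · intro k hk
    rw [degree_quadratic hb] at hk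
    have hk2 : k < 2 := by exact_mod_cast hk
    rw [Ideal.mem_span_singleton]
    interval_cases k <;> simp [hpa]
  · rw [degree_quadratic hb]; norm_num
  · rw [Ideal.span_singleton_pow, Ideal.mem_span_singleton]
    simpa using hpa2
  · intro c hc
    rw [C_dvd_iff_dvd_coeff] at hc
    exact hab.isUnit_of_dvd' (by simpa using hc 0) (by simpa using hc 2)

/-- `ℂ[x, y]` as the ring of polynomials in `x` over `ℂ[y]`. -/
noncomputable def polyXOverPolyY : MvPolynomial (Fin 2) ℂ ≃ₐ[ℂ] ℂ[X][X] :=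
  (MvPolynomial.finSuccEquiv ℂ 1).trans (mapAlgEquiv (MvPolynomial.uniqueAlgEquiv ℂ (Fin 1)))

theorem polyXOverPolyY_xP : polyXOverPolyY xP = X := by
  simp [polyXOverPolyY, xP, MvPolynomial.finSuccEquiv_X_zero]

theorem polyXOverPolyY_yP : polyXOverPolyY yP = C X := by
  have h : MvPolynomial.finSuccEquiv ℂ 1 (MvPolynomial.X 1) = C (MvPolynomial.X 0) :=
    MvPolynomial.finSuccEquiv_X_succ (j := 0)
  simp [polyXOverPolyY, yP, h]

theorem polyXOverPolyY_aeval_yP (p : ℂ[X]) : polyXOverPolyY (aeval yP p) = C p := by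
  rw [← AlgEquiv.coe_toAlgHom, ← aeval_algHom_apply, AlgEquiv.coe_toAlgHom, polyXOverPolyY_yP]
  have h := aeval_algHom_apply (CAlgHom (R := ℂ) (A := ℂ[X])) X p
  simpa using h

/-- For every positive integer `m`, the polynomial
`R̃_m(x,y) = S_m(y) - S_{m-1}(y) + x^2 * ∑_{i=0}^{m-1} S_i(y)` is irreducible in `ℂ[x,y]`. -/
theorem Rtilde_irreducible (m : ℕ) (hm : 0 < m) :
    Irreducible (aeval yP (S ℂ m) - aeval yP (S ℂ ((m : ℤ) - 1))
      + xP ^ 2 * ∑ i ∈ Finset.range m, aeval yP (S ℂ (i : ℤ))) := by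
  obtain ⟨n, rfl⟩ := Nat.exists_eq_succ_of_ne_zero hm.ne'
  obtain ⟨r, hr⟩ := exists_isRoot_S_sub n
  have hcop : IsCoprime (S ℂ (n + 1) - S ℂ n) (∑ i ∈ Finset.range (n + 1), S ℂ i) :=
    ⟨1, -(X - 2), by rw [S_sub_eq_one_add_mul_sum]; ring⟩
  have h := irreducible_C_add_X_sq_mul_C hcop (prime_X_sub_C r) (dvd_iff_isRoot.mpr hr)
    (not_sq_dvd_S_sub n r)
  rw [← MulEquiv.irreducible_iff polyXOverPolyY]
  simpa [polyXOverPolyY_xP, polyXOverPolyY_aeval_yP] using h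
end

section
/- For every integer m ≥ 1, the identity X_m(x,y) = −S_m(y) + S_{m−2}(y) − x²·(S_{m−1}(y) + 2·∑_{i=0}^{m−2} S_i(y)) holds in ℂ[x,y]. -/
open Polynomial

/-- The polynomials `X_m ∈ ℂ[x,y]` defined by `X_0 = -2`, `X_1 = -x^2 - y` and
`X_{m+1} = y * X_m - X_{m-1} - 2x^2` for all `m : ℤ`. -/
noncomputable def Xp : ℤ → MvPolynomial (Fin 2) ℂ
  | 0 => -2
  | 1 => -(MvPolynomial.X 0) ^ 2 - MvPolynomial.X 1
  | (m : ℕ) + 2 => MvPolynomial.X 1 * Xp (m + 1) - Xp m - 2 * (MvPolynomial.X 0) ^ 2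
  | -((m : ℕ) + 1) => MvPolynomial.X 1 * Xp (-m) - Xp (-m + 1) - 2 * (MvPolynomial.X 0) ^ 2
  termination_by m => Int.natAbs m + Int.natAbs (m - 1)

theorem S_add_two (R : Type*) [CommRing R] (n : ℕ) :
    S R ((n : ℤ) + 2) = X * S R ((n : ℤ) + 1) - S R n :=
  S.eq_3 R n

theorem S_neg_one (R : Type*) [CommRing R] : S R (-1) = 0 := by
  have h : S R (-((0 : ℕ) + 1)) = X * S R (-(0 : ℕ)) - S R (-(0 : ℕ) + 1) := S.eq_4 R 0
  simpa [S] using h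

theorem Xp_add_two (m : ℕ) :
    Xp ((m : ℤ) + 2) = yP * Xp ((m : ℤ) + 1) - Xp m - 2 * xP ^ 2 :=
  Xp.eq_3 m

theorem aeval_S_add_two {R A : Type*} [CommRing R] [CommRing A] [Algebra R A] (a : A) (n : ℕ) :
    aeval a (S R ((n : ℤ) + 2)) = a * aeval a (S R ((n : ℤ) + 1)) - aeval a (S R n) := by
  simp [S_add_two]

/-- The partial sums of `S` satisfy the recurrence of `S` with an extra constant term. -/
theorem sum_aeval_S_add_two {R A : Type*} [CommRing R] [CommRing A] [Algebra R A] (a : A)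
    (n : ℕ) :
    ∑ i ∈ Finset.range (n + 2), aeval a (S R (i : ℤ)) =
      a * ∑ i ∈ Finset.range (n + 1), aeval a (S R (i : ℤ))
        - ∑ i ∈ Finset.range n, aeval a (S R (i : ℤ)) + 1 := by
  induction n with
  | zero => simp [Finset.sum_range_succ, S, add_comm]
  | succ n ih =>
    have hS := aeval_S_add_two (R := R) a n
    have h₂ := Finset.sum_range_succ (fun i : ℕ => aeval a (S R (i : ℤ))) (n + 2)
    have h₁ := Finset.sum_range_succ (fun i : ℕ => aeval a (S R (i : ℤ))) (n + 1)
    have h₀ := Finset.sum_range_succ (fun i : ℕ => aeval a (S R (i : ℤ))) n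
    push_cast at h₂ h₁ h₀
    linear_combination h₂ + ih - a * h₁ + h₀ + hS

/-- The general term of `Xp` at `n + 1`, free of truncated subtraction. -/
theorem Xp_add_one (n : ℕ) :
    Xp ((n : ℤ) + 1) = -(aeval yP (S ℂ ((n : ℤ) + 1))) + aeval yP (S ℂ ((n : ℤ) - 1))
      - xP ^ 2 * (aeval yP (S ℂ (n : ℤ))
        + 2 * ∑ i ∈ Finset.range n, aeval yP (S ℂ (i : ℤ))) := by
  induction n using Nat.twoStepInduction with
  | zero =>
    simp [S, S_neg_one, Xp, xP, yP]
    ring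
  | one =>
    have hX := Xp_add_two 0
    have hS := aeval_S_add_two (R := ℂ) yP 0
    norm_num [S, Xp] at hX hS ⊢
    rw [hX, hS, xP, yP]
    ring
  | more n ih₀ ih₁ =>
    have hX := Xp_add_two (n + 1)
    have hS₂ := aeval_S_add_two (R := ℂ) yP n
    have hS₃ := aeval_S_add_two (R := ℂ) yP (n + 1)
    have hS₁ : aeval yP (S ℂ ((n : ℤ) + 1))
        = yP * aeval yP (S ℂ (n : ℤ)) - aeval yP (S ℂ ((n : ℤ) - 1)) := by
      cases n with
      | zero => simp [S, S_neg_one]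
      | succ k =>
        have h := aeval_S_add_two (R := ℂ) yP k
        push_cast
        rwa [add_assoc, one_add_one_eq_two, add_sub_cancel_right]
    rw [sum_aeval_S_add_two]
    push_cast at hX hS₃ ih₁ ⊢
    rw [show (n : ℤ) + 1 + 2 = n + 2 + 1 by ring, show (n : ℤ) + 1 + 1 = n + 2 by ring] at *
    rw [show (n : ℤ) + 2 - 1 = n + 1 by ring]
    rw [add_sub_cancel_right] at ih₁
    rw [hX, ih₁, ih₀, hS₃, hS₂]
    linear_combination -hS₁

/-- General term of `X_m` for `m ≥ 1`:
`X_m = -S_m(y) + S_{m-2}(y) - x^2 * (S_{m-1}(y) + 2 * ∑_{i=0}^{m-2} S_i(y))`. -/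
theorem Xp_general_term (m : ℕ) (hm : 1 ≤ m) :
    Xp (m : ℤ) = -(aeval yP (S ℂ (m : ℤ))) + aeval yP (S ℂ ((m : ℤ) - 2))
      - xP ^ 2 * (aeval yP (S ℂ ((m : ℤ) - 1))
        + 2 * ∑ i ∈ Finset.range (m - 1), aeval yP (S ℂ (i : ℤ))) := by
  obtain ⟨n, rfl⟩ := Nat.exists_eq_add_of_le' hm
  have h := Xp_add_one n
  push_cast
  rwa [add_sub_cancel_right, show (n : ℤ) + 1 - 2 = n - 1 by ring]
end

section
/- Let f, g ∈ ℂ[z] be nonzero polynomials that are relatively prime and such that deg f − deg g is an odd integer. Then the polynomial Φ(x,z) = f(z) + x²·g(z) is irreducible in ℂ[x,z]. -/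
open Polynomial

/-- The variable `z` of `ℂ[x,z]`. -/
noncomputable def zP : MvPolynomial (Fin 2) ℂ := MvPolynomial.X 1

/-- A constant in the outer variable dividing `f + x² g` divides both `f` and `g`, hence is a
unit when `f` and `g` are coprime. -/
lemma isUnit_of_C_dvd_C_add_X_sq_mul_C {R : Type*} [CommRing R] {f g c : R}
    (hcop : IsCoprime f g) (h : C c ∣ C f + X ^ 2 * C g) : IsUnit c := by
  rw [C_dvd_iff_dvd_coeff] at h
  have h0 := h 0
  have h2 := h 2
  simp [coeff_C] at h0 h2
  exact hcop.isUnit_of_dvd' h0 h2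

lemma natDegree_C_add_X_sq_mul_C {R : Type*} [CommRing R] (f : R) {g : R} (hg : g ≠ 0) :
    (C f + X ^ 2 * C g).natDegree = 2 := by
  have : C f + X ^ 2 * C g = C g * X ^ 2 + C 0 * X + C f := by
    rw [C_0]; ring
  rw [this, natDegree_quadratic hg]

/-- If `a₀ b₀ = f`, `a₁ b₁ = g` and `a₀ b₁ + a₁ b₀ = 0`, the degrees of `f` and `g` have the same
parity. -/
lemma even_natDegree_sub_of_mul_add_mul_eq_zero {K : Type*} [Field K] {a₀ a₁ b₀ b₁ : K[X]}
    (h₀ : a₀ * b₀ ≠ 0) (h₁ : a₁ * b₁ ≠ 0) (h : a₀ * b₁ + a₁ * b₀ = 0) :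
    Even (((a₀ * b₀).natDegree : ℤ) - ((a₁ * b₁).natDegree : ℤ)) := by
  obtain ⟨ha₀, hb₀⟩ := mul_ne_zero_iff.1 h₀
  obtain ⟨ha₁, hb₁⟩ := mul_ne_zero_iff.1 h₁
  have hdeg := congrArg natDegree (eq_neg_of_add_eq_zero_left h)
  rw [natDegree_neg, natDegree_mul ha₀ hb₁, natDegree_mul ha₁ hb₀] at hdeg
  rw [natDegree_mul ha₀ hb₀, natDegree_mul ha₁ hb₁]
  exact ⟨a₀.natDegree - a₁.natDegree, by push_cast; lia⟩

lemma irreducible_C_add_X_sq_mul_C_s13 {K : Type*} [Field K] {f g : K[X]} (hf : f ≠ 0) (hg : g ≠ 0)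
    (hcop : IsCoprime f g) (hodd : Odd ((f.natDegree : ℤ) - (g.natDegree : ℤ))) :
    Irreducible (C f + X ^ 2 * C g) := by
  have hdeg := natDegree_C_add_X_sq_mul_C f hg
  refine ⟨fun h => two_ne_zero (hdeg.symm.trans (natDegree_eq_zero_of_isUnit h)), fun a b hab => ?_⟩
  have hne : a * b ≠ 0 := fun h => by rw [hab, h, natDegree_zero] at hdeg; lia
  obtain ⟨ha, hb⟩ := mul_ne_zero_iff.1 hne
  have isUnit_of_natDegree_eq_zero {p : K[X][X]} (hp : p ∣ C f + X ^ 2 * C g)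
      (h : p.natDegree = 0) : IsUnit p := by
    rw [eq_C_of_natDegree_eq_zero h] at hp ⊢
    exact (isUnit_of_C_dvd_C_add_X_sq_mul_C hcop hp).map C
  by_cases ha0 : a.natDegree = 0
  · exact .inl (isUnit_of_natDegree_eq_zero ⟨b, hab⟩ ha0)
  by_cases hb0 : b.natDegree = 0
  · exact .inr (isUnit_of_natDegree_eq_zero ⟨a, by rw [hab, mul_comm]⟩ hb0)
  rw [hab, natDegree_mul ha hb] at hdeg
  obtain ⟨a₁, a₀, rfl⟩ := exists_eq_X_add_C_of_natDegree_le_one (p := a) (by lia)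
  obtain ⟨b₁, b₀, rfl⟩ := exists_eq_X_add_C_of_natDegree_le_one (p := b) (by lia)
  have hprod : C f + X ^ 2 * C g =
      C (a₀ * b₀) + X * C (a₀ * b₁ + a₁ * b₀) + X ^ 2 * C (a₁ * b₁) := by
    rw [hab]; simp only [C_mul, C_add]; ring
  have h0 := congrArg (coeff · 0) hprod
  have h1 := congrArg (coeff · 1) hprod
  have h2 := congrArg (coeff · 2) hprod
  simp only [coeff_add, coeff_mul_C, coeff_X_pow, coeff_X, coeff_C] at h0 h1 h2
  norm_num at h0 h1 h2
  subst h0 h2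
  exact absurd hodd (Int.not_odd_iff_even.2
    (even_natDegree_sub_of_mul_add_mul_eq_zero hf hg h1.symm))

/-- The isomorphism `ℂ[x,z] ≃ ℂ[z][x]`. -/
noncomputable def bivariateEquiv : MvPolynomial (Fin 2) ℂ ≃ₐ[ℂ] ℂ[X][X] :=
  (MvPolynomial.finSuccEquiv ℂ 1).trans
    (Polynomial.mapAlgEquiv (MvPolynomial.uniqueAlgEquiv ℂ (Fin 1)))

lemma bivariateEquiv_xP : bivariateEquiv xP = X := by
  simp [bivariateEquiv, xP, MvPolynomial.finSuccEquiv_X_zero]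

lemma bivariateEquiv_zP : bivariateEquiv zP = C X := by
  have : MvPolynomial.finSuccEquiv ℂ 1 zP = C (MvPolynomial.X 0) :=
    MvPolynomial.finSuccEquiv_X_succ (j := 0)
  simp [bivariateEquiv, this]

lemma bivariateEquiv_aeval_zP (p : ℂ[X]) : bivariateEquiv (aeval zP p) = C p := by
  rw [← aeval_algHom_apply, bivariateEquiv_zP]
  exact (aeval_algHom_apply (CAlgHom (R := ℂ) (A := ℂ[X])) X p).trans (by simp)

/-- If `f, g ∈ ℂ[z]` are nonzero, relatively prime, and `deg f - deg g` is odd, then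
`Φ(x,z) = f(z) + x^2 g(z)` is irreducible in `ℂ[x,z]`. -/
theorem irreducible_of_coprime_odd_degree (f g : Polynomial ℂ) (hf : f ≠ 0) (hg : g ≠ 0)
    (hcop : IsCoprime f g) (hodd : Odd ((f.natDegree : ℤ) - (g.natDegree : ℤ))) :
    Irreducible (aeval zP f + xP ^ 2 * aeval zP g) := by
  rw [← MulEquiv.irreducible_iff bivariateEquiv, map_add, map_mul, map_pow,
    bivariateEquiv_aeval_zP, bivariateEquiv_aeval_zP, bivariateEquiv_xP]
  exact irreducible_C_add_X_sq_mul_C_s13 hf hg hcop hodd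
end

section
/- Let p ≥ 5 be an odd integer not divisible by 3, and set d = (p−1)/2 and ℓ = ⌊p/3⌋. Then the polynomials S_d(z) − S_{d−1}(z) and S_{⌊ℓ/2⌋}(z) − S_{⌊ℓ/2⌋−1}(z) are relatively prime in ℂ[z]. -/
open Polynomial

theorem S_eq_chebyshev_S (R : Type*) [CommRing R] (n : ℤ) :
    S R n = Polynomial.Chebyshev.S R n := by
  induction n using Polynomial.Chebyshev.induct with
  | zero => simp [S]
  | one => simp [S]
  | add_two n ih₁ ih₂ =>
    rw [Chebyshev.S_add_two, ← ih₁, ← ih₂]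
    exact S.eq_3 R n
  | neg_add_one n ih₁ ih₂ =>
    rw [Chebyshev.S_sub_one, ← ih₁, ← ih₂, ← S.eq_4, Int.negSucc_eq, neg_add']

/-- The difference of two consecutive Chebyshev `S` polynomials. -/
noncomputable def diffS (R : Type*) [CommRing R] (n : ℤ) : R[X] :=
  Chebyshev.S R n - Chebyshev.S R (n - 1)

theorem diffS_add_one (R : Type*) [CommRing R] (n : ℤ) :
    diffS R (n + 1) = X * diffS R n - diffS R (n - 1) := by
  have h₁ := Chebyshev.S_add_one R n
  simp only [diffS, sub_sub, add_sub_cancel_right, one_add_one_eq_two]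
  have h₃ := Chebyshev.S_sub_one R (n - 1)
  rw [sub_sub, one_add_one_eq_two, sub_add_cancel] at h₃
  linear_combination h₁ - h₃

theorem diffS_neg (R : Type*) [CommRing R] (n : ℤ) : diffS R (-n) = diffS R (n - 1) := by
  have h₁ := Chebyshev.S_neg R n
  have h₂ := Chebyshev.S_neg_sub_one R n
  rw [diffS, diffS, sub_sub, one_add_one_eq_two]
  linear_combination h₁ - h₂

theorem isCoprime_diffS_add_one (R : Type*) [CommRing R] (n : ℕ) :
    IsCoprime (diffS R n) (diffS R (n + 1)) := by
  induction n with
  | zero => simp [diffS, isCoprime_one_left]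
  | succ n ih =>
    obtain ⟨a, b, h⟩ := ih
    have h₁ := diffS_add_one R (n + 1)
    rw [add_sub_cancel_right] at h₁
    push_cast
    exact ⟨b + a * X, -a, by linear_combination h - a * h₁⟩

theorem diffS_dvd_add_sub (R : Type*) [CommRing R] (k : ℤ) (j : ℕ) :
    diffS R k ∣ diffS R (k + j) + diffS R (k - j) := by
  induction j using Nat.twoStepInduction with
  | zero => simp
  | one => exact ⟨X, by linear_combination diffS_add_one R k⟩
  | more j ih₀ ih₁ =>
    have h₁ := diffS_add_one R (k + (j + 1))
    have h₂ := diffS_add_one R (k - (j + 1))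
    rw [show k + ((j : ℤ) + 1) + 1 = k + (j + 2) by ring,
      show k + ((j : ℤ) + 1) - 1 = k + j by ring] at h₁
    rw [show k - ((j : ℤ) + 1) + 1 = k - j by ring,
      show k - ((j : ℤ) + 1) - 1 = k - (j + 2) by ring] at h₂
    push_cast at *
    convert dvd_sub (ih₁.mul_left X) ih₀ using 1
    linear_combination h₁ + h₂

/-- For odd `p ≥ 5` not divisible by `3`, with `d = (p-1)/2` and `ℓ = ⌊p/3⌋`,
the polynomials `S_d(z) - S_{d-1}(z)` and `S_{⌊ℓ/2⌋}(z) - S_{⌊ℓ/2⌋-1}(z)` are coprime. -/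
theorem coprime_S_d_S_halfl (p : ℤ) (hp5 : 5 ≤ p) (hodd : Odd p) (h3 : ¬(3 ∣ p)) :
    IsCoprime (S ℂ ((p - 1) / 2) - S ℂ ((p - 1) / 2 - 1))
      (S ℂ (p / 3 / 2) - S ℂ (p / 3 / 2 - 1)) := by
  simp only [S_eq_chebyshev_S]
  change IsCoprime (diffS ℂ _) (diffS ℂ _)
  obtain ⟨k, hk⟩ : ∃ k : ℕ, p = 6 * k + 1 ∨ p = 6 * k + 5 := ⟨(p / 6).toNat, by grind⟩
  rw [show p / 3 / 2 = k by lia]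
  have key (j : ℕ) (h : IsCoprime (diffS ℂ (k - j)) (diffS ℂ k)) :
      IsCoprime (diffS ℂ (k + j)) (diffS ℂ k) := by
    obtain ⟨c, hc⟩ := diffS_dvd_add_sub ℂ k j
    rw [show diffS ℂ (k + j) = -diffS ℂ (k - j) + c * diffS ℂ k by linear_combination hc]
    exact h.neg_left.add_mul_right_left c
  rcases hk with hk | hk
  · rw [show (p - 1) / 2 = k + (2 * k : ℕ) by lia]
    apply key
    rw [show (k : ℤ) - (2 * k : ℕ) = -k by push_cast; ring, diffS_neg]
    obtain ⟨m, rfl⟩ : ∃ m, k = m + 1 := ⟨k - 1, by lia⟩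
    simpa using isCoprime_diffS_add_one ℂ m
  · rw [show (p - 1) / 2 = k + (2 * k + 2 : ℕ) by lia]
    apply key
    rw [show (k : ℤ) - (2 * k + 2 : ℕ) = -(k + 1 + 1) by push_cast; ring, diffS_neg,
      add_sub_cancel_right]
    exact (isCoprime_diffS_add_one ℂ k).symm
end

section
/- Let p ≥ 5 be an odd integer not divisible by 3, and set d = (p−1)/2 and ℓ = ⌊p/3⌋. Then the polynomial Φ(x,z) = S_d(z) − S_{d−1}(z) + x²·(2−z)·S_{d−ℓ−1}(z)·S_{ℓ−1−⌊ℓ/2⌋}(z)·(S_{⌊ℓ/2⌋}(z) − S_{⌊ℓ/2⌋−1}(z)) is irreducible in ℂ[x,z]. -/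
open Polynomial

namespace TwoBridge

theorem S_eq_chebyshev (R : Type*) [CommRing R] (n : ℤ) : S R n = Chebyshev.S R n := by
  induction n using Chebyshev.induct with
  | zero => simp [S]
  | one => simp [S]
  | add_two n ih1 ih2 =>
    rw [Chebyshev.S_add_two, ← ih1, ← ih2]
    exact S.eq_3 R n
  | neg_add_one n ih1 ih2 =>
    rw [Chebyshev.S_sub_one, ← ih1, ← ih2, ← neg_add']
    exact S.eq_4 R n

theorem S_add (R : Type*) [CommRing R] (m n : ℤ) :
    Chebyshev.S R (m + n) =
      Chebyshev.S R m * Chebyshev.S R n - Chebyshev.S R (m - 1) * Chebyshev.S R (n - 1) := by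
  induction n using Chebyshev.induct with
  | zero => simp
  | one => simp [Chebyshev.S_add_one, mul_comm]
  | add_two n ih1 ih2 =>
    have h1 := Chebyshev.S_add_two R (m + n)
    have h2 := Chebyshev.S_add_two R (n : ℤ)
    have h3 := Chebyshev.S_add_one R (n : ℤ)
    rw [show m + ((n : ℤ) + 1) = m + n + 1 by ring, add_sub_cancel_right] at ih1
    rw [← add_assoc, show (n : ℤ) + 2 - 1 = n + 1 by ring]
    linear_combination h1 + X * ih1 - ih2 - Chebyshev.S R m * h2 + Chebyshev.S R (m - 1) * h3
  | neg_add_one n ih1 ih2 =>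
    have h1 := Chebyshev.S_sub_one R (m + -n)
    have h2 := Chebyshev.S_sub_one R (-n : ℤ)
    have h3 := Chebyshev.S_sub_two R (-n : ℤ)
    rw [← add_assoc, add_sub_cancel_right] at ih2
    rw [← add_sub_assoc, show (-n : ℤ) - 1 - 1 = -n - 2 by ring]
    linear_combination h1 + X * ih1 - ih2 - Chebyshev.S R m * h2 + Chebyshev.S R (m - 1) * h3

/-- The difference `S n - S (n - 1)` of consecutive Chebyshev `S`-polynomials. -/
noncomputable def D (R : Type*) [CommRing R] (n : ℤ) : R[X] :=
  Chebyshev.S R n - Chebyshev.S R (n - 1)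

theorem D_neg (R : Type*) [CommRing R] (n : ℤ) : D R (-n) = D R (n - 1) := by
  rw [D, D, Chebyshev.S_neg, Chebyshev.S_neg_sub_one, show n - 1 - 1 = n - 2 by ring]
  ring

theorem D_eval_two (R : Type*) [CommRing R] (n : ℤ) : (D R n).eval 2 = 1 := by
  simp [D, Chebyshev.S_eval_two]

theorem D_three_mul (R : Type*) [CommRing R] (k : ℤ) :
    D R (3 * k) = (Chebyshev.C R k ^ 2 - 1) * D R k - Chebyshev.C R k := by
  have h2 := S_add R k k
  have h2' := S_add R k (k - 1)
  have h3 := S_add R (k + k) k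
  have h3' := S_add R (k + k) (k - 1)
  have hs := Chebyshev.S_sub_two R k
  have hq := Chebyshev.S_sq_add_S_sq R (k - 1)
  have hc := Chebyshev.C_eq_S_sub_X_mul_S R k
  rw [sub_add_cancel] at hq
  rw [show k - 1 - 1 = k - 2 by ring] at h2' h3'
  rw [show k + k - 1 = k + (k - 1) by ring] at h3 h3'
  rw [D, D, show 3 * k = k + k + k by ring, show k + k + k - 1 = k + k + (k - 1) by ring,
    h3, h3', h2, h2', hs, hc]
  generalize Chebyshev.S R k = a at *
  generalize Chebyshev.S R (k - 1) = b at *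
  linear_combination -(3 * a - X * b - b) * hq

theorem isCoprime_D_three_mul (R : Type*) [CommRing R] (k : ℤ) :
    IsCoprime (D R (3 * k)) ((2 - X) * Chebyshev.S R (k - 1) ^ 2 * D R k) := by
  have hq := Chebyshev.S_sq_add_S_sq R (k - 1)
  rw [sub_add_cancel] at hq
  have hc := Chebyshev.C_eq_S_sub_X_mul_S R k
  have hD := D_three_mul R k
  refine .mul_right (.mul_right ?_ (.pow_right ?_)) ?_
  · obtain ⟨u, hu⟩ := X_sub_C_dvd_sub_C_eval (a := (2 : R)) (p := D R (3 * k))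
    rw [D_eval_two, map_one, C_ofNat] at hu
    exact ⟨1, u, by linear_combination hu⟩
  · rw [hD, hc, D]
    generalize Chebyshev.S R k = a at *
    generalize Chebyshev.S R (k - 1) = b at *
    refine ⟨a, -((X ^ 2 - 4) * b * (1 + b * (X * a - b - a)) + (2 * X - 3) * a - b), ?_⟩
    linear_combination (4 * (a ^ 2 - a * b) + 1 + (X ^ 2 - 4) * b ^ 2) * hq
  · rw [hD, hc, D]
    generalize Chebyshev.S R k = a at *
    generalize Chebyshev.S R (k - 1) = b at *
    refine ⟨-b, b * ((2 * a - X * b) ^ 2 - 1) - (X * b - a + b), ?_⟩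
    linear_combination hq

theorem irreducible_C_add_X_sq_mul_C {R : Type*} [CommRing R] [IsDomain R] {a b q : R}
    (hab : IsCoprime a b) (hq : Prime q) (hb : q ∣ b) (hb2 : ¬ q ^ 2 ∣ b) :
    Irreducible (C a + X ^ 2 * C b) := by
  have hqa : ¬ q ∣ a := fun h ↦ hq.not_isUnit (hab.isUnit_of_dvd' h hb)
  have hb0 : b ≠ 0 := by rintro rfl; exact hb2 (dvd_zero _)
  have c0 : (C a + X ^ 2 * C b).coeff 0 = a := by simp
  have c1 : (C a + X ^ 2 * C b).coeff 1 = 0 := by simp [coeff_X_pow]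
  have c2 : (C a + X ^ 2 * C b).coeff 2 = b := by simp [coeff_X_pow]
  have hdeg : (C a + X ^ 2 * C b).natDegree = 2 := by compute_degree!
  generalize C a + X ^ 2 * C b = f at *
  have hf0 : f ≠ 0 := by rintro rfl; simp at hdeg
  have const : ∀ g h : R[X], f = g * h → g.natDegree = 0 → IsUnit g := by
    intro g h hf hg
    rw [eq_C_of_natDegree_eq_zero hg] at hf ⊢
    refine (hab.isUnit_of_dvd' ⟨h.coeff 0, ?_⟩ ⟨h.coeff 2, ?_⟩).map C
    · rw [← c0, hf, coeff_C_mul]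
    · rw [← c2, hf, coeff_C_mul]
  refine ⟨fun hu ↦ by simp [natDegree_eq_zero_of_isUnit hu] at hdeg, fun g h hf ↦ ?_⟩
  have hsum : g.natDegree + h.natDegree = 2 := by
    rw [← hdeg, hf, natDegree_mul (left_ne_zero_of_mul (hf ▸ hf0))
      (right_ne_zero_of_mul (hf ▸ hf0))]
  obtain hg | hh | ⟨hg, hh⟩ :
      g.natDegree = 0 ∨ h.natDegree = 0 ∨ g.natDegree = 1 ∧ h.natDegree = 1 := by omega
  · exact .inl (const g h hf hg)
  · exact .inr (const h g (by rw [hf, mul_comm]) hh)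
  · exfalso
    obtain ⟨r, s, rfl⟩ : ∃ r s, g = C r * X + C s :=
      ⟨_, _, eq_X_add_C_of_natDegree_le_one hg.le⟩
    obtain ⟨u, v, rfl⟩ : ∃ u v, h = C u * X + C v :=
      ⟨_, _, eq_X_add_C_of_natDegree_le_one hh.le⟩
    have hf' : f = C (r * u) * X ^ 2 + C (r * v + s * u) * X + C (s * v) := by
      rw [hf]; simp only [map_mul, map_add]; ring
    have e0 : s * v = a := by rw [← c0, hf']; simp
    have e1 : r * v + s * u = 0 := by rw [← c1, hf']; simp [-map_mul, -map_add, coeff_X_pow]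
    have e2 : r * u = b := by rw [← c2, hf']; simp [-map_mul, -map_add, coeff_X_pow]
    have hs : ¬ q ∣ s := fun h ↦ hqa (e0 ▸ h.mul_right v)
    have hv : ¬ q ∣ v := fun h ↦ hqa (e0 ▸ h.mul_left s)
    have hru : q ∣ r ↔ q ∣ u := by
      constructor <;> intro h
      · exact (hq.dvd_or_dvd ((dvd_add_right (h.mul_right v)).1 (e1 ▸ dvd_zero q))).resolve_left hs
      · exact (hq.dvd_or_dvd ((dvd_add_left (h.mul_left s)).1 (e1 ▸ dvd_zero q))).resolve_right hv
    have hr : q ∣ r := (hq.dvd_or_dvd (e2 ▸ hb)).elim id hru.2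
    exact hb2 (e2 ▸ sq q ▸ mul_dvd_mul hr (hru.1 hr))

theorem irreducible_bivariate {k : ℤ} (hk : k ≠ 0) :
    Irreducible (C (D ℂ (3 * k)) +
      X ^ 2 * C ((2 - X) * Chebyshev.S ℂ (k - 1) ^ 2 * D ℂ k)) := by
  refine irreducible_C_add_X_sq_mul_C (isCoprime_D_three_mul ℂ k) (prime_X_sub_C (2 : ℂ)) ?_ ?_
  · exact ⟨-(Chebyshev.S ℂ (k - 1) ^ 2 * D ℂ k), by rw [C_ofNat]; ring⟩
  · rintro ⟨u, hu⟩
    have h : Chebyshev.S ℂ (k - 1) ^ 2 * D ℂ k = -((X - C 2) * u) := by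
      refine mul_left_cancel₀ (X_sub_C_ne_zero (2 : ℂ)) ?_
      rw [C_ofNat] at *
      linear_combination -hu
    have h2 := congrArg (eval 2) h
    simp [D_eval_two, Chebyshev.S_eval_two, hk] at h2

/-- The identification of `ℂ[x,z]` with polynomials in `x` over `ℂ[z]`. -/
noncomputable def bivariateEquiv : MvPolynomial (Fin 2) ℂ ≃ₐ[ℂ] ℂ[X][X] :=
  (MvPolynomial.finSuccEquiv ℂ 1).trans
    (Polynomial.mapAlgEquiv (MvPolynomial.uniqueAlgEquiv ℂ (Fin 1)))

theorem bivariateEquiv_xP : bivariateEquiv xP = X := by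
  simp [bivariateEquiv, xP, MvPolynomial.finSuccEquiv_X_zero]

theorem bivariateEquiv_zP : bivariateEquiv zP = C X := by
  have h := MvPolynomial.finSuccEquiv_X_succ (R := ℂ) (n := 1) (j := 0)
  rw [Fin.succ_zero_eq_one] at h
  simp [bivariateEquiv, zP, h]

theorem bivariateEquiv_aeval_zP (f : ℂ[X]) : bivariateEquiv (aeval zP f) = C f := by
  rw [← AlgEquiv.coe_toAlgHom, ← aeval_algHom_apply, AlgEquiv.coe_toAlgHom, bivariateEquiv_zP]
  exact (aeval_algHom_apply (CAlgHom (R := ℂ) (A := ℂ[X])) X f).trans (by simp)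

theorem irreducible_mvPolynomial {k : ℤ} (hk : k ≠ 0) :
    Irreducible (aeval zP (D ℂ (3 * k)) + xP ^ 2 * (2 - zP) *
      aeval zP (Chebyshev.S ℂ (k - 1)) * aeval zP (Chebyshev.S ℂ (k - 1)) *
        aeval zP (D ℂ k)) := by
  rw [← MulEquiv.irreducible_iff bivariateEquiv]
  convert irreducible_bivariate hk using 1
  simp only [map_add, map_mul, map_sub, map_pow, map_ofNat, bivariateEquiv_xP, bivariateEquiv_zP,
    bivariateEquiv_aeval_zP]
  ring

end TwoBridge

open TwoBridge in
/-- For odd `p ≥ 5` not divisible by `3`, with `d = (p-1)/2` and `ℓ = ⌊p/3⌋`, the polynomial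
`Φ(x,z) = S_d(z) - S_{d-1}(z) + x^2 (2-z) S_{d-ℓ-1}(z) S_{ℓ-1-⌊ℓ/2⌋}(z) (S_{⌊ℓ/2⌋}(z) - S_{⌊ℓ/2⌋-1}(z))`
is irreducible in `ℂ[x,z]`. -/
theorem Phi_irreducible (p : ℤ) (hp5 : 5 ≤ p) (hodd : Odd p) (h3 : ¬(3 ∣ p)) :
    Irreducible (aeval zP (S ℂ ((p - 1) / 2)) - aeval zP (S ℂ ((p - 1) / 2 - 1)) +
      xP ^ 2 * (2 - zP) * aeval zP (S ℂ ((p - 1) / 2 - p / 3 - 1)) *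
        aeval zP (S ℂ (p / 3 - 1 - p / 3 / 2)) *
        (aeval zP (S ℂ (p / 3 / 2)) - aeval zP (S ℂ (p / 3 / 2 - 1)))) := by
  simp only [S_eq_chebyshev, ← map_sub]
  obtain ⟨k, hk, rfl | rfl⟩ : ∃ k : ℤ, 0 < k ∧ (p = 6 * k + 1 ∨ p = 6 * k - 1) := by
    obtain ⟨m, rfl⟩ := hodd
    obtain h | h : (2 * m + 1) % 6 = 1 ∨ (2 * m + 1) % 6 = 5 := by omega
    · exact ⟨(2 * m + 1) / 6, by omega, .inl (by omega)⟩
    · exact ⟨(2 * m + 1) / 6 + 1, by omega, .inr (by omega)⟩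
  · convert irreducible_mvPolynomial hk.ne' using 1
    rw [show (6 * k + 1 - 1) / 2 = 3 * k by omega, show (6 * k + 1) / 3 = 2 * k by omega,
      show 3 * k - 2 * k - 1 = k - 1 by ring, show 2 * k / 2 = k by omega,
      show 2 * k - 1 - k = k - 1 by ring, D, D]
  · convert irreducible_mvPolynomial (neg_ne_zero.2 hk.ne') using 1
    rw [show (6 * k - 1 - 1) / 2 = 3 * k - 1 by omega, show (6 * k - 1) / 3 = 2 * k - 1 by omega,
      show 3 * k - 1 - (2 * k - 1) - 1 = k - 1 by ring, show (2 * k - 1) / 2 = k - 1 by omega,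
      show 2 * k - 1 - 1 - (k - 1) = k - 1 by ring, mul_neg, D_neg, D_neg, D, D,
      Chebyshev.S_neg_sub_one, map_neg]
    ring
end
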